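/- Let X ∈ [0,1) be non-constant with μ = E[−log X] ∈ (0,∞], and define Ψ(c) = c Λ*(−1/c) for c > 0, where Λ* is the Legendre transform of λ ↦ log E[X^λ]. Then the set {c > 1/μ : Ψ(c) > 1} is non-empty, α_max := inf of this set satisfies 1/μ < α_max < +∞, Ψ is strictly increasing on (1/μ, ∞) ∩ {Ψ < ∞}, and Ψ(c) < 1 for all c ∈ (1/μ, α_max). -/

import Mathlib

open MeasureTheory Filter
open scoped ENNReal Classical

/-- The cumulant generating function `Λ(λ) = log E[e^{λY}]`, valued in `EReal`. -/
noncomputable def cgfE {Ω : Type*} [MeasurableSpace Ω] (P : Measure Ω)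
    (Y : Ω → ℝ) (l : ℝ) : EReal :=
  if Integrable (fun ω => Real.exp (l * Y ω)) P then
    ((Real.log (∫ ω, Real.exp (l * Y ω) ∂P) : ℝ) : EReal) else ⊤

/-- The Fenchel–Legendre transform `Λ*(z) = sup_{λ ∈ ℝ} {λ z − Λ(λ)}`. -/
noncomputable def legendreE {Ω : Type*} [MeasurableSpace Ω] (P : Measure Ω)
    (Y : Ω → ℝ) (z : ℝ) : EReal :=
  ⨆ l : ℝ, ((l * z : ℝ) : EReal) - cgfE P Y l

/-- `Ψ(c) = c Λ*(−1/c)` for the random variable `log X`. -/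
noncomputable def psiE {Ω : Type*} [MeasurableSpace Ω] (P : Measure Ω)
    (X : Ω → ℝ) (c : ℝ) : EReal :=
  (c : EReal) * legendreE P (fun ω => Real.log (X ω)) (-1 / c)

/-!
Write `Y = log X`, `Λ = cgf Y P` and `a = 1/μ`, where `μ = E[-Y]`. Then `Ψ c` is the supremum over
`l` of the affine functions `c ↦ -l - c Λ(l)`, and Jensen's inequality `Λ(l) ≥ -l μ` says that all
of them are nonpositive at `c = a`. Hence `Ψ` lies below its chords from the point `(a, 0)`.
Moreover `Ψ > 0` on `(a, ∞)`, because `Λ` has right derivative `-μ` at `0`, and `Ψ` is finite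
somewhere on `(a, ∞)`, because `Y` exceeds some value above its mean `-μ` with positive probability.
Strict monotonicity and the position of the level set `{Ψ > 1}` follow from these three facts alone.
-/

section Chords

/-- The function `f` lies on `(a, ∞)` below all its chords from the point `(a, 0)`; equivalently,
`c ↦ f c / (c - a)` is nondecreasing there. Values of `f` enter only through their real upper
bounds `B`, so that no arithmetic with infinite values is needed. -/
def BelowChordsFrom (f : ℝ → EReal) (a : ℝ) : Prop :=
  ∀ ⦃c₁ c₂ B : ℝ⦄, a < c₁ → c₁ ≤ c₂ → f c₂ ≤ B → f c₁ ≤ ((c₁ - a) / (c₂ - a) * B : ℝ)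

namespace BelowChordsFrom

variable {f : ℝ → EReal} {a : ℝ}

theorem apply_lt_apply (hf : BelowChordsFrom f a) {c₁ c₂ : ℝ} (h₁ : a < c₁) (h₁₂ : c₁ < c₂)
    (hpos : 0 < f c₂) (hfin : f c₂ < ⊤) : f c₁ < f c₂ := by
  obtain ⟨r, hr⟩ : ∃ r : ℝ, f c₂ = r :=
    ⟨(f c₂).toReal, (EReal.coe_toReal hfin.ne (ne_bot_of_gt hpos)).symm⟩
  rw [hr, EReal.coe_pos] at hpos
  have hratio : (c₁ - a) / (c₂ - a) < 1 := by
    rw [div_lt_one (by linarith)]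
    linarith
  calc f c₁ ≤ ((c₁ - a) / (c₂ - a) * r : ℝ) := hf h₁ h₁₂.le hr.le
    _ < (r : EReal) := EReal.coe_lt_coe_iff.2 (mul_lt_of_lt_one_left hpos hratio)
    _ = f c₂ := hr.symm

theorem superlevel_nonempty (hf : BelowChordsFrom f a) {c₁ : ℝ} (h₁ : a < c₁) (hpos : 0 < f c₁)
    (t : ℝ) : {c : ℝ | a < c ∧ (t : EReal) < f c}.Nonempty := by
  obtain ⟨r, hr, hrf⟩ := EReal.lt_iff_exists_real_btwn.1 hpos
  rw [EReal.coe_pos] at hr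
  set q : ℝ := max 1 (t / r)
  have hq : 1 ≤ q := le_max_left _ _
  have hd : 0 < c₁ - a := by linarith
  have hc : c₁ ≤ a + (c₁ - a) * q := by nlinarith
  refine ⟨a + (c₁ - a) * q, h₁.trans_le hc, ?_⟩
  by_contra! hle
  have hchord : (c₁ - a) / (a + (c₁ - a) * q - a) * t ≤ r := by
    have htr : t ≤ r * q := (div_le_iff₀' hr).1 (le_max_right _ _)
    rw [add_sub_cancel_left, div_mul_cancel_left₀ hd.ne', inv_mul_le_iff₀ (by linarith)]
    linarith
  exact (hf h₁ hc hle).not_gt ((EReal.coe_le_coe_iff.2 hchord).trans_lt hrf)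

theorem lt_sInf_superlevel (hf : BelowChordsFrom f a) {t : ℝ} (ht : 0 < t)
    (hne : {c : ℝ | a < c ∧ (t : EReal) < f c}.Nonempty) {c₀ : ℝ} (h₀ : a < c₀)
    (hfin : f c₀ < ⊤) : a < sInf {c : ℝ | a < c ∧ (t : EReal) < f c} := by
  obtain ⟨K, hK, -⟩ := EReal.lt_iff_exists_real_btwn.1 hfin
  set q : ℝ := max 1 (K / t)
  have hq : 1 ≤ q := le_max_left _ _
  have hd : 0 < c₀ - a := by linarith
  have hgap : 0 < (c₀ - a) / q := by positivity
  refine (lt_add_of_pos_right a hgap).trans_le (le_csInf hne ?_)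
  rintro c ⟨hc, htc⟩
  by_contra! hlt
  have hcq : (c - a) * q ≤ c₀ - a := by
    rw [← le_div_iff₀ (by positivity)]
    linarith
  have hchord : (c - a) / (c₀ - a) * K ≤ t := by
    have hKt : K ≤ q * t := (div_le_iff₀ ht).1 (le_max_right _ _)
    rw [div_mul_eq_mul_div, div_le_iff₀ hd]
    nlinarith
  have hcc₀ : c ≤ c₀ := by nlinarith
  exact (hf hc hcc₀ hK.le).not_gt ((EReal.coe_le_coe_iff.2 hchord).trans_lt htc)

theorem lt_of_lt_sInf_superlevel (hf : BelowChordsFrom f a) (hpos : ∀ c, a < c → 0 < f c)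
    {t c : ℝ} (hc : a < c) (hlt : c < sInf {c : ℝ | a < c ∧ (t : EReal) < f c}) :
    f c < t := by
  obtain ⟨c', hcc', hc'⟩ := exists_between hlt
  have ha : a < c' := hc.trans hcc'
  have hle : f c' ≤ t := by
    by_contra! h
    exact notMem_of_lt_csInf hc' ⟨a, fun x hx ↦ hx.1.le⟩ ⟨ha, h⟩
  exact (hf.apply_lt_apply hc hcc' (hpos c' ha) (hle.trans_lt (EReal.coe_lt_top t))).trans_le hle

end BelowChordsFrom

end Chords

section ReverseFatou

open Topology

variable {Ω : Type*} [MeasurableSpace Ω] {P : Measure Ω}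

theorem integrable_and_le_integral_of_tendsto {F : ℕ → Ω → ℝ} {f G : Ω → ℝ} {y : ℝ}
    (hF : ∀ n, Integrable (F n) P) (hG : Integrable G P) (hFG : ∀ n, F n ≤ᵐ[P] G)
    (hlim : ∀ᵐ ω ∂P, Tendsto (fun n ↦ F n ω) atTop (𝓝 (f ω))) (hy : ∀ n, y ≤ ∫ ω, F n ω ∂P) :
    Integrable f P ∧ y ≤ ∫ ω, f ω ∂P := by
  have hGF : ∀ n, Integrable (fun ω ↦ G ω - F n ω) P := fun n ↦ hG.sub (hF n)
  have hfG : 0 ≤ᵐ[P] fun ω ↦ G ω - f ω := by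
    filter_upwards [hlim, ae_all_iff.2 hFG] with ω hω hle
    exact sub_nonneg.2 (le_of_tendsto' hω hle)
  have hfatou : ∫⁻ ω, ENNReal.ofReal (G ω - f ω) ∂P ≤ ENNReal.ofReal (∫ ω, G ω ∂P - y) :=
    calc ∫⁻ ω, ENNReal.ofReal (G ω - f ω) ∂P
        = ∫⁻ ω, liminf (fun n ↦ ENNReal.ofReal (G ω - F n ω)) atTop ∂P := by
          refine lintegral_congr_ae (hlim.mono fun ω hω ↦ ?_)
          exact (ENNReal.tendsto_ofReal (hω.const_sub (G ω))).liminf_eq.symm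
      _ ≤ liminf (fun n ↦ ∫⁻ ω, ENNReal.ofReal (G ω - F n ω) ∂P) atTop :=
          lintegral_liminf_le' fun n ↦ (hGF n).aemeasurable.ennreal_ofReal
      _ ≤ ENNReal.ofReal (∫ ω, G ω ∂P - y) := by
          refine liminf_le_of_frequently_le' (Frequently.of_forall fun n ↦ ?_)
          rw [← ofReal_integral_eq_lintegral_ofReal (hGF n)
            ((hFG n).mono fun ω ↦ sub_nonneg.2), integral_sub hG (hF n)]
          exact ENNReal.ofReal_le_ofReal (sub_le_sub_left (hy n) _)
  have hGf : Integrable (fun ω ↦ G ω - f ω) P := by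
    refine ⟨hG.1.sub (aestronglyMeasurable_of_tendsto_ae _ (fun n ↦ (hF n).1) hlim), ?_⟩
    rw [hasFiniteIntegral_iff_ofReal hfG]
    exact hfatou.trans_lt ENNReal.ofReal_lt_top
  have hf : Integrable f P := (hG.sub hGf).congr (ae_of_all _ fun ω ↦ by simp)
  refine ⟨hf, ?_⟩
  have hyG : y ≤ ∫ ω, G ω ∂P := (hy 0).trans (integral_mono_ae (hF 0) hG (hFG 0))
  rw [← ofReal_integral_eq_lintegral_ofReal hGf hfG,
    ENNReal.ofReal_le_ofReal_iff (sub_nonneg.2 hyG), integral_sub hG hf] at hfatou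
  linarith

end ReverseFatou

section ExpSlope

open Topology

theorem le_exp_mul_sub_one_div {l : ℝ} (hl : 0 < l) (x : ℝ) : x ≤ (Real.exp (l * x) - 1) / l := by
  rw [le_div_iff₀ hl]
  linarith [Real.add_one_le_exp (l * x)]

theorem exp_mul_sub_one_div_mono {l l' : ℝ} (hl : 0 < l) (hll' : l ≤ l') (x : ℝ) :
    (Real.exp (l * x) - 1) / l ≤ (Real.exp (l' * x) - 1) / l' := by
  have hconv : ConvexOn ℝ Set.univ fun s : ℝ ↦ Real.exp (s * x) :=
    convexOn_exp.comp_linearMap (LinearMap.mulRight ℝ x)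
  simpa using hconv.secant_mono (Set.mem_univ 0) (Set.mem_univ l) (Set.mem_univ l') hl.ne'
    (hl.trans_le hll').ne' hll'

theorem tendsto_exp_mul_sub_one_div (x : ℝ) :
    Tendsto (fun l ↦ (Real.exp (l * x) - 1) / l) (𝓝[≠] 0) (𝓝 x) := by
  have hderiv : HasDerivAt (fun l ↦ Real.exp (l * x)) x 0 := by
    simpa using ((hasDerivAt_id (0 : ℝ)).mul_const x).exp
  simpa [slope_fun_def_field] using hderiv.tendsto_slope

end ExpSlope

section Cgf

open ProbabilityTheory Topology

variable {Ω : Type*} [MeasurableSpace Ω] {P : Measure Ω} {Y : Ω → ℝ}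

theorem integrable_of_mem_integrableExpSet_of_neg_of_pos {l l₀ : ℝ} (hl : l < 0) (hl₀ : 0 < l₀)
    (h : l ∈ integrableExpSet Y P) (h₀ : l₀ ∈ integrableExpSet Y P) : Integrable Y P :=
  integrable_of_mem_interior_integrableExpSet <| mem_interior_iff_mem_nhds.2 <|
    mem_of_superset (Icc_mem_nhds hl hl₀) (convex_integrableExpSet.ordConnected.out h h₀)

theorem mem_integrableExpSet_of_mem_Icc [IsFiniteMeasure P] {l l₀ : ℝ}
    (h₀ : l₀ ∈ integrableExpSet Y P) (hl : l ∈ Set.Icc 0 l₀) : l ∈ integrableExpSet Y P :=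
  convex_integrableExpSet.ordConnected.out (by simp [integrableExpSet]) h₀ hl

variable [IsProbabilityMeasure P]

theorem mul_integral_le_cgf {l : ℝ} (hY : Integrable Y P) (hl : l ∈ integrableExpSet Y P) :
    l * ∫ ω, Y ω ∂P ≤ cgf Y P l := by
  rw [cgf, Real.le_log_iff_exp_le (mgf_pos hl), ← integral_const_mul]
  exact convexOn_exp.map_integral_le Real.continuous_exp.continuousOn isClosed_univ
    (ae_of_all _ fun _ ↦ Set.mem_univ _) (hY.const_mul l) hl

-- The slopes `(exp (l Y) - 1) / l` decrease to `Y` as `l ↓ 0`, and their means are at least `y`.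
theorem integrable_and_le_integral_of_forall_mul_le_cgf {l₀ y : ℝ} (hl₀ : 0 < l₀)
    (h₀ : l₀ ∈ integrableExpSet Y P) (hy : ∀ l ∈ Set.Ioc 0 l₀, l * y ≤ cgf Y P l) :
    Integrable Y P ∧ y ≤ ∫ ω, Y ω ∂P := by
  have hmem : ∀ n : ℕ, l₀ / (n + 1) ∈ Set.Ioc 0 l₀ := fun n ↦
    ⟨by positivity, div_le_self hl₀.le (by simp)⟩
  have hslope : ∀ l ∈ Set.Ioc 0 l₀, Integrable (fun ω ↦ (Real.exp (l * Y ω) - 1) / l) P :=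
    fun l hl ↦ ((mem_integrableExpSet_of_mem_Icc h₀ (Set.Ioc_subset_Icc_self hl)).sub
      (integrable_const 1)).div_const l
  have hmean : ∀ l ∈ Set.Ioc 0 l₀, y ≤ ∫ ω, (Real.exp (l * Y ω) - 1) / l ∂P := by
    intro l hl
    have hint : Integrable (fun ω ↦ Real.exp (l * Y ω)) P :=
      mem_integrableExpSet_of_mem_Icc h₀ (Set.Ioc_subset_Icc_self hl)
    calc y ≤ (Real.exp (l * y) - 1) / l := le_exp_mul_sub_one_div hl.1 y
      _ ≤ (mgf Y P l - 1) / l := by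
        have := hl.1.le
        gcongr
        rw [← exp_cgf hint]
        exact Real.exp_le_exp.2 (hy l hl)
      _ = ∫ ω, (Real.exp (l * Y ω) - 1) / l ∂P := by
        rw [integral_div, integral_sub hint (integrable_const 1)]
        simp [mgf]
  have hzero : Tendsto (fun n : ℕ ↦ l₀ / ((n : ℝ) + 1)) atTop (𝓝[≠] 0) := by
    refine tendsto_nhdsWithin_iff.2 ⟨?_, .of_forall fun n ↦ (hmem n).1.ne'⟩
    simpa [div_eq_mul_inv] using tendsto_one_div_add_atTop_nhds_zero_nat.const_mul l₀
  exact integrable_and_le_integral_of_tendsto (fun n ↦ hslope _ (hmem n))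
    (hslope l₀ ⟨hl₀, le_rfl⟩)
    (fun n ↦ ae_of_all _ fun ω ↦ exp_mul_sub_one_div_mono (hmem n).1 (hmem n).2 (Y ω))
    (ae_of_all _ fun ω ↦ (tendsto_exp_mul_sub_one_div (Y ω)).comp hzero)
    (fun n ↦ hmean _ (hmem n))

end Cgf

section Nonconstant

variable {Ω : Type*} [MeasurableSpace Ω] {P : Measure Ω} {Y : Ω → ℝ}

theorem exists_gt_integral_measure_le_ne_zero [IsProbabilityMeasure P]
    (hconst : ¬ ∃ y : ℝ, ∀ᵐ ω ∂P, Y ω = y) (hY : Integrable Y P) :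
    ∃ r, ∫ ω, Y ω ∂P < r ∧ P {ω | r ≤ Y ω} ≠ 0 := by
  by_contra! h
  have hle : ∀ᵐ ω ∂P, Y ω ≤ ∫ ω, Y ω ∂P := (ae_le_const_iff_forall_gt_measure_zero _ _).2 h
  exact hconst ⟨_, (integral_eq_iff_of_ae_le hY (integrable_const _) hle).1 (by simp)⟩

theorem integral_neg_of_ae_nonpos (hne : ¬ ∀ᵐ ω ∂P, Y ω = 0) (hY0 : ∀ᵐ ω ∂P, Y ω ≤ 0)
    (hY : Integrable Y P) : ∫ ω, Y ω ∂P < 0 := by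
  refine (integral_nonpos_of_ae hY0).lt_of_ne fun h ↦ hne ?_
  exact (integral_eq_iff_of_ae_le hY (integrable_zero _ _ _) hY0).1 (by simpa using h)

theorem exists_ae_eq_const_of_injOn [NeZero P] {α β : Type*} {X : Ω → α} {g : α → β} {s : Set α}
    (hg : Set.InjOn g s) (hX : ∀ᵐ ω ∂P, X ω ∈ s) (h : ∃ y, ∀ᵐ ω ∂P, g (X ω) = y) :
    ∃ x, ∀ᵐ ω ∂P, X ω = x := by
  obtain ⟨y, hy⟩ := h
  obtain ⟨ω₀, h₀, hω₀⟩ := (hX.and hy).exists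
  refine ⟨X ω₀, ?_⟩
  filter_upwards [hX, hy] with ω hω hωy
  exact hg hω h₀ (hωy.trans hω₀.symm)

end Nonconstant

section Perspective

open ProbabilityTheory

variable {Ω : Type*} [MeasurableSpace Ω] {P : Measure Ω} {Y : Ω → ℝ}

/-- The perspective `c ↦ c Λ*(-1/c)` of the Legendre transform of the cumulant generating function
of `Y`; for `Y = log X` it is the function `Ψ` of the theorem. -/
noncomputable def legendrePerspective (P : Measure Ω) (Y : Ω → ℝ) (c : ℝ) : EReal :=
  (c : EReal) * legendreE P Y (-1 / c)

/-- The reciprocal `1/μ` of `μ = E[-Y] ∈ (0, ∞]`. If `Y` is not integrable, its Bochner integral is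
`0` and `0⁻¹ = 0`, which is the convention `1/∞ = 0`. -/
noncomputable def invNegMean (P : Measure Ω) (Y : Ω → ℝ) : ℝ :=
  (-∫ ω, Y ω ∂P)⁻¹

theorem legendrePerspective_le_coe_iff {c : ℝ} (hc : 0 < c) (B : ℝ) :
    legendrePerspective P Y c ≤ B ↔ ∀ l ∈ integrableExpSet Y P, -l - c * cgf Y P l ≤ B := by
  have hc' : (0 : EReal) < c := EReal.coe_pos.2 hc
  rw [legendrePerspective, mul_comm, ← EReal.le_div_iff_mul_le hc' (EReal.coe_ne_top c),
    ← EReal.coe_div, legendreE, iSup_le_iff]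
  refine forall_congr' fun l ↦ ?_
  by_cases h : Integrable (fun ω ↦ Real.exp (l * Y ω)) P
  · have hline : (l * (-1 / c) - cgf Y P l) * c = -l - c * cgf Y P l := by
      field_simp
    have hcgf : cgfE P Y l = cgf Y P l := if_pos h
    rw [hcgf, ← EReal.coe_sub, EReal.coe_le_coe_iff, le_div_iff₀ hc, hline]
    exact ⟨fun hB _ ↦ hB, fun hB ↦ hB h⟩
  · simp [cgfE, integrableExpSet, h]

theorem invNegMean_of_not_integrable (hY : ¬ Integrable Y P) : invNegMean P Y = 0 := by
  simp [invNegMean, integral_undef hY]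

theorem invNegMean_nonneg (hneg : Integrable Y P → ∫ ω, Y ω ∂P < 0) : 0 ≤ invNegMean P Y := by
  by_cases hY : Integrable Y P
  · exact inv_nonneg.2 (neg_nonneg.2 (hneg hY).le)
  · exact (invNegMean_of_not_integrable hY).ge

theorem invNegMean_eq_toReal_inv_lintegral (hY : AEMeasurable Y P) (hY0 : ∀ᵐ ω ∂P, Y ω ≤ 0) :
    invNegMean P Y = (∫⁻ ω, ENNReal.ofReal (-Y ω) ∂P)⁻¹.toReal := by
  rw [invNegMean, ← integral_neg, integral_eq_lintegral_of_nonneg_ae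
    (hY0.mono fun ω ↦ neg_nonneg.2) hY.neg.aestronglyMeasurable, ENNReal.toReal_inv]

variable [IsProbabilityMeasure P] {l₀ : ℝ}

theorem neg_le_invNegMean_mul_cgf (hl₀ : 0 < l₀) (h₀ : l₀ ∈ integrableExpSet Y P)
    (hneg : Integrable Y P → ∫ ω, Y ω ∂P < 0) {l : ℝ} (hl : l ∈ integrableExpSet Y P) :
    -l ≤ invNegMean P Y * cgf Y P l := by
  by_cases hY : Integrable Y P
  · rw [invNegMean, le_inv_mul_iff₀ (neg_pos.2 (hneg hY))]
    linarith [mul_integral_le_cgf hY hl]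
  · have hl_nonneg : 0 ≤ l := by
      by_contra! hlt
      exact hY (integrable_of_mem_integrableExpSet_of_neg_of_pos hlt hl₀ hl h₀)
    simpa [invNegMean_of_not_integrable hY] using hl_nonneg

theorem belowChordsFrom_legendrePerspective (hl₀ : 0 < l₀) (h₀ : l₀ ∈ integrableExpSet Y P)
    (hneg : Integrable Y P → ∫ ω, Y ω ∂P < 0) :
    BelowChordsFrom (legendrePerspective P Y) (invNegMean P Y) := by
  intro c₁ c₂ B h₁ h₁₂ hB
  have ha := invNegMean_nonneg hneg
  rw [legendrePerspective_le_coe_iff (by linarith)] at hB ⊢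
  intro l hl
  have hline_a := neg_le_invNegMean_mul_cgf hl₀ h₀ hneg hl
  have hline_c₂ := hB l hl
  set a := invNegMean P Y
  rw [div_mul_eq_mul_div, le_div_iff₀ (by linarith)]
  -- An affine function at `c₁` is the convex combination of its values at `a` and `c₂`.
  calc (-l - c₁ * cgf Y P l) * (c₂ - a)
      = (c₂ - c₁) * (-l - a * cgf Y P l) + (c₁ - a) * (-l - c₂ * cgf Y P l) := by ring
    _ ≤ (c₂ - c₁) * 0 + (c₁ - a) * B := by
      gcongr
      linarith
    _ = (c₁ - a) * B := by ring

theorem legendrePerspective_pos (hl₀ : 0 < l₀) (h₀ : l₀ ∈ integrableExpSet Y P)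
    (hneg : Integrable Y P → ∫ ω, Y ω ∂P < 0) {c : ℝ} (hc : invNegMean P Y < c) :
    0 < legendrePerspective P Y c := by
  have hc0 : 0 < c := (invNegMean_nonneg hneg).trans_lt hc
  by_contra! hle
  have hlines := (legendrePerspective_le_coe_iff hc0 0).1 hle
  obtain ⟨hY, hmean⟩ := integrable_and_le_integral_of_forall_mul_le_cgf (y := -c⁻¹) hl₀ h₀ <| by
    intro l hl
    have hline := hlines l (mem_integrableExpSet_of_mem_Icc h₀ (Set.Ioc_subset_Icc_self hl))
    rw [mul_neg, ← div_eq_mul_inv, ← neg_div, div_le_iff₀ hc0]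
    linarith
  exact hc.not_ge (le_inv_of_le_inv₀ (neg_pos.2 (hneg hY)) (by linarith))

theorem exists_pos_invNegMean_lt_inv_measure_neg_le_ne_zero
    (hneg : Integrable Y P → ∫ ω, Y ω ∂P < 0) (hconst : ¬ ∃ y : ℝ, ∀ᵐ ω ∂P, Y ω = y) :
    ∃ b, 0 < b ∧ invNegMean P Y < b⁻¹ ∧ P {ω | -b ≤ Y ω} ≠ 0 := by
  by_cases hY : Integrable Y P
  · obtain ⟨r, hr, hPr⟩ := exists_gt_integral_measure_le_ne_zero hconst hY
    have hm := hneg hY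
    have hmin : min r ((∫ ω, Y ω ∂P) / 2) < 0 := min_lt_of_right_lt (by linarith)
    have hgt : ∫ ω, Y ω ∂P < min r ((∫ ω, Y ω ∂P) / 2) := lt_min hr (by linarith)
    refine ⟨-min r ((∫ ω, Y ω ∂P) / 2), neg_pos.2 hmin,
      inv_strictAnti₀ (neg_pos.2 hmin) (neg_lt_neg hgt), fun h ↦ hPr (measure_mono_null ?_ h)⟩
    intro ω hω
    simpa using Or.inl hω
  · have hcover : ⋃ n : ℕ, {ω | -((n : ℝ) + 1) ≤ Y ω} = Set.univ := by
      refine Set.eq_univ_of_forall fun ω ↦ Set.mem_iUnion.2 ?_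
      obtain ⟨n, hn⟩ := exists_nat_ge (-Y ω)
      exact ⟨n, show -((n : ℝ) + 1) ≤ Y ω by linarith⟩
    obtain ⟨n, hn⟩ := exists_measure_pos_of_not_measure_iUnion_null (μ := P)
      (s := fun n : ℕ ↦ {ω | -((n : ℝ) + 1) ≤ Y ω}) (by
        rw [hcover, measure_univ]
        exact one_ne_zero)
    refine ⟨n + 1, by positivity, ?_, hn.ne'⟩
    rw [invNegMean_of_not_integrable hY]
    positivity

theorem exists_gt_invNegMean_legendrePerspective_lt_top (hl₀ : 0 < l₀)
    (h₀ : l₀ ∈ integrableExpSet Y P) (hneg : Integrable Y P → ∫ ω, Y ω ∂P < 0)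
    (hconst : ¬ ∃ y : ℝ, ∀ᵐ ω ∂P, Y ω = y) :
    ∃ c, invNegMean P Y < c ∧ legendrePerspective P Y c < ⊤ := by
  obtain ⟨b, hb, hab, hPb⟩ := exists_pos_invNegMean_lt_inv_measure_neg_le_ne_zero hneg hconst
  set p := P.real {ω | -b ≤ Y ω}
  have hp : 0 < p := ENNReal.toReal_pos hPb (measure_ne_top _ _)
  have hlogp : Real.log p ≤ 0 := Real.log_nonpos hp.le measureReal_le_one
  refine ⟨b⁻¹, hab, lt_of_le_of_lt ?_ (EReal.coe_lt_top (-(b⁻¹ * Real.log p)))⟩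
  rw [legendrePerspective_le_coe_iff (inv_pos.2 hb)]
  intro l hl
  rcases le_or_gt 0 l with hl_nonneg | hl_neg
  · have hchernoff : Real.log p ≤ l * b + cgf Y P l := by
      rw [Real.log_le_iff_le_exp hp]
      simpa using measure_ge_le_exp_cgf (-b) hl_nonneg hl
    calc -l - b⁻¹ * cgf Y P l = -(b⁻¹ * (l * b + cgf Y P l)) := by field_simp; ring
      _ ≤ -(b⁻¹ * Real.log p) := by gcongr
  · have hline := neg_le_invNegMean_mul_cgf hl₀ h₀ hneg hl
    have hcgf : 0 < cgf Y P l :=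
      pos_of_mul_pos_right ((neg_pos.2 hl_neg).trans_le hline) (invNegMean_nonneg hneg)
    have hslope : invNegMean P Y * cgf Y P l ≤ b⁻¹ * cgf Y P l := by gcongr
    have hbound : b⁻¹ * Real.log p ≤ 0 := mul_nonpos_of_nonneg_of_nonpos (by positivity) hlogp
    linarith

/-- The exponential moment `h₀` makes the positive part of `Y` integrable, so that `hneg` says
`E[Y] ∈ [-∞, 0)`. -/
theorem psi_properties_general (hl₀ : 0 < l₀) (h₀ : l₀ ∈ integrableExpSet Y P)
    (hneg : Integrable Y P → ∫ ω, Y ω ∂P < 0) (hconst : ¬ ∃ y : ℝ, ∀ᵐ ω ∂P, Y ω = y) :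
    {c : ℝ | invNegMean P Y < c ∧ 1 < legendrePerspective P Y c}.Nonempty ∧
    invNegMean P Y < sInf {c : ℝ | invNegMean P Y < c ∧ 1 < legendrePerspective P Y c} ∧
    (∀ c₁ c₂ : ℝ, invNegMean P Y < c₁ → c₁ < c₂ →
      legendrePerspective P Y c₁ < ⊤ → legendrePerspective P Y c₂ < ⊤ →
      legendrePerspective P Y c₁ < legendrePerspective P Y c₂) ∧
    (∀ c : ℝ, invNegMean P Y < c →
      c < sInf {c : ℝ | invNegMean P Y < c ∧ 1 < legendrePerspective P Y c} →
      legendrePerspective P Y c < 1) := by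
  have hchords := belowChordsFrom_legendrePerspective hl₀ h₀ hneg
  have hpos : ∀ c, invNegMean P Y < c → 0 < legendrePerspective P Y c :=
    fun c hc ↦ legendrePerspective_pos hl₀ h₀ hneg hc
  have hne := hchords.superlevel_nonempty (lt_add_one _) (hpos _ (lt_add_one _)) 1
  obtain ⟨c₀, hc₀, hfin⟩ := exists_gt_invNegMean_legendrePerspective_lt_top hl₀ h₀ hneg hconst
  exact ⟨hne, hchords.lt_sInf_superlevel one_pos hne hc₀ hfin,
    fun c₁ c₂ h₁ h₁₂ _ h₂ ↦ hchords.apply_lt_apply h₁ h₁₂ (hpos c₂ (h₁.trans h₁₂)) h₂,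
    fun c hc hlt ↦ hchords.lt_of_lt_sInf_superlevel hpos hc hlt⟩

end Perspective

section Log

-- `0` is included because `Real.log 0 = 0`, a value not attained on `(0, 1)`.
theorem injOn_log_Ico : Set.InjOn Real.log (Set.Ico 0 1) := by
  have hzero : ∀ x ∈ Set.Ico (0 : ℝ) 1, Real.log x = 0 → x = 0 := fun x hx h ↦ by
    rcases Real.log_eq_zero.1 h with h | h | h <;> linarith [hx.1, hx.2]
  intro x hx y hy hxy
  rcases hx.1.eq_or_lt with rfl | hx0
  · exact (hzero y hy (by simpa using hxy.symm)).symm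
  rcases hy.1.eq_or_lt with rfl | hy0
  · exact hzero x hx (by simpa using hxy)
  exact Real.log_injOn_pos hx0 hy0 hxy

end Log

/-- Properties of `Ψ` for a non-constant `X ∈ [0,1)` with `μ = E[−log X] ∈ (0,∞]`
(interpreting `1/μ = 0` when `μ = ∞`): the set `{c > 1/μ : Ψ(c) > 1}` is non-empty,
its infimum `α_max` satisfies `1/μ < α_max < ∞`, `Ψ` is strictly increasing on
`(1/μ, ∞) ∩ {Ψ < ∞}`, and `Ψ(c) < 1` for all `c ∈ (1/μ, α_max)`. -/
theorem psi_properties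
    {Ω : Type*} [MeasurableSpace Ω] (P : Measure Ω) [IsProbabilityMeasure P]
    (X : Ω → ℝ) (hmeas : Measurable X)
    (hrange : ∀ ω, X ω ∈ Set.Ico (0 : ℝ) 1)
    (hnonconst : ¬ ∃ c : ℝ, ∀ᵐ ω ∂P, X ω = c)
    (μ : ℝ≥0∞) (hμ : μ = ∫⁻ ω, ENNReal.ofReal (- Real.log (X ω)) ∂P)
    (invμ : ℝ) (hinv : invμ = (μ⁻¹).toReal) :
    {c : ℝ | invμ < c ∧ 1 < psiE P X c}.Nonempty ∧
    invμ < sInf {c : ℝ | invμ < c ∧ 1 < psiE P X c} ∧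
    (∀ c₁ c₂ : ℝ, invμ < c₁ → c₁ < c₂ →
      psiE P X c₁ < ⊤ → psiE P X c₂ < ⊤ → psiE P X c₁ < psiE P X c₂) ∧
    (∀ c : ℝ, invμ < c → c < sInf {c : ℝ | invμ < c ∧ 1 < psiE P X c} →
      psiE P X c < 1) := by
  have hlog : Measurable fun ω ↦ Real.log (X ω) := hmeas.log
  have hlog_nonpos : ∀ᵐ ω ∂P, Real.log (X ω) ≤ 0 :=
    ae_of_all _ fun ω ↦ Real.log_nonpos (hrange ω).1 (hrange ω).2.le
  have hconst : ¬ ∃ y : ℝ, ∀ᵐ ω ∂P, Real.log (X ω) = y := fun h ↦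
    hnonconst (exists_ae_eq_const_of_injOn injOn_log_Ico (ae_of_all _ hrange) h)
  rw [hinv, hμ, ← invNegMean_eq_toReal_inv_lintegral hlog.aemeasurable hlog_nonpos]
  exact psi_properties_general one_pos
    (ProbabilityTheory.integrable_exp_mul_of_le 1 0 one_pos.le hlog.aemeasurable hlog_nonpos)
    (integral_neg_of_ae_nonpos (fun h ↦ hconst ⟨0, h⟩) hlog_nonpos) hconst
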